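/- For every integer k ≥ 3: (i) m(k) ≤ 1 + m(k−1), and (ii) for every divisor d of k with 1 < d < k, m(k) ≤ m(d) + m(k/d). Hence m(k) ≤ min{1 + m(k−1), min over proper nontrivial divisors d of k of m(d) + m(k/d)}. -/

import Mathlib

/-!
Adjoining to a space a point whose only neighbourhood is the whole space adds exactly one open set
(`realizable_succ`), and the disjoint union of two spaces has the product of their numbers of open
sets (`realizable_mul`). Applied to spaces of minimal size, these give the two bounds. Minimal
spaces exist because every `k ≥ 1` is a number of open sets (`exists_realizable`), by iterating the
first construction from the empty space; so the infimum defining `minPoints` is attained.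
-/

/-- `minPoints k` is the least number of points on which there exists a topology
with exactly `k` open sets. -/
noncomputable def minPoints (k : ℕ) : ℕ :=
  sInf {n : ℕ | ∃ t : TopologicalSpace (Fin n), Nat.card {s : Set (Fin n) // t.IsOpen s} = k}

/-- Some topology on `n` points has exactly `k` open sets; this is the predicate whose least `n`
is `minPoints k`. -/
def Realizable (n k : ℕ) : Prop :=
  ∃ t : TopologicalSpace (Fin n), Nat.card {s : Set (Fin n) // t.IsOpen s} = k

/-- The points may be taken from any type with `n` elements in place of `Fin n`. -/
lemma Realizable.of_equiv {α : Type} {n k : ℕ} (e : α ≃ Fin n) (t : TopologicalSpace α)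
    (h : Nat.card {s : Set α // t.IsOpen s} = k) : Realizable n k := by
  refine ⟨t.coinduced e, ?_⟩
  rw [← h]
  refine Nat.card_congr ((Equiv.Set.congr e.symm).subtypeEquiv fun s => ?_)
  change t.IsOpen (e ⁻¹' s) ↔ t.IsOpen (e.symm '' s)
  rw [Equiv.image_symm_eq_preimage]

/-- The topology on `Option α` whose open sets are the whole space and the open sets of `α`. -/
abbrev closedExtension {α : Type} (t : TopologicalSpace α) : TopologicalSpace (Option α) where
  IsOpen s := (none ∈ s → s = Set.univ) ∧ t.IsOpen (some ⁻¹' s)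
  isOpen_univ := ⟨fun _ => rfl, t.isOpen_univ⟩
  isOpen_inter := by
    rintro s u ⟨hs, hs'⟩ ⟨hu, hu'⟩
    exact ⟨fun h => by rw [hs h.1, hu h.2, Set.inter_self], t.isOpen_inter _ _ hs' hu'⟩
  isOpen_sUnion := by
    intro S hS
    refine ⟨?_, ?_⟩
    · rintro ⟨s, hsS, hs⟩
      exact Set.eq_univ_of_univ_subset ((hS s hsS).1 hs ▸ Set.subset_sUnion_of_mem hsS)
    · rw [Set.preimage_sUnion]
      exact isOpen_biUnion fun s hs => (hS s hs).2

/-- In `closedExtension t`, the new open set is the whole space; the others are those of `t`. -/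
noncomputable def closedExtensionOpens {α : Type} (t : TopologicalSpace α) :
    Option {s : Set α // t.IsOpen s} ≃
      {s : Set (Option α) // (closedExtension t).IsOpen s} := by
  refine Equiv.ofBijective
    (fun o => o.elim ⟨Set.univ, (closedExtension t).isOpen_univ⟩
      fun s => ⟨some '' s.1, fun h => by simp at h, ?_⟩) ⟨?_, ?_⟩
  · rw [Set.preimage_image_eq _ (Option.some_injective α)]
    exact s.2
  · have hne : ∀ s : Set α, some '' s ≠ Set.univ := fun s h => by
      have : (none : Option α) ∈ some '' s := h ▸ Set.mem_univ _
      simp at this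
    rintro (_ | ⟨s, hs⟩) (_ | ⟨u, hu⟩) h
    · rfl
    · exact absurd (congrArg Subtype.val h).symm (hne u)
    · exact absurd (congrArg Subtype.val h) (hne s)
    · have := (Option.some_injective α).image_injective (congrArg Subtype.val h)
      subst this
      rfl
  · rintro ⟨s, hs, hs'⟩
    by_cases hn : none ∈ s
    · exact ⟨none, Subtype.ext (hs hn).symm⟩
    · refine ⟨some ⟨_, hs'⟩, Subtype.ext ?_⟩
      ext (_ | x) <;> simp [hn]

lemma realizable_succ {n k : ℕ} (h : Realizable n k) : Realizable (n + 1) (k + 1) := by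
  obtain ⟨t, ht⟩ := h
  refine Realizable.of_equiv (finSuccEquiv n).symm (closedExtension t) ?_
  rw [← Nat.card_congr (closedExtensionOpens t), Finite.card_option, ht]

lemma realizable_mul {m n j k : ℕ} (h₁ : Realizable m j) (h₂ : Realizable n k) :
    Realizable (m + n) (j * k) := by
  obtain ⟨t₁, rfl⟩ := h₁
  obtain ⟨t₂, rfl⟩ := h₂
  refine Realizable.of_equiv finSumFinEquiv inferInstance ?_
  rw [← Nat.card_prod]
  refine Nat.card_congr ((Set.sumEquiv.toEquiv.subtypeEquiv fun s => ?_).trans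
    Equiv.subtypeProdEquivProd)
  exact isOpen_sum_iff

lemma exists_realizable (k : ℕ) : ∃ n, Realizable n (k + 1) := by
  induction k with
  | zero =>
    refine ⟨0, ⊤, ?_⟩
    have : Nonempty {s : Set (Fin 0) // (⊤ : TopologicalSpace (Fin 0)).IsOpen s} :=
      ⟨⟨Set.univ, (⊤ : TopologicalSpace (Fin 0)).isOpen_univ⟩⟩
    exact Nat.card_unique
  | succ k ih =>
    obtain ⟨n, hn⟩ := ih
    exact ⟨n + 1, realizable_succ hn⟩

lemma realizable_minPoints {k : ℕ} (hk : 0 < k) : Realizable (minPoints k) k := by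
  obtain ⟨j, rfl⟩ := Nat.exists_eq_succ_of_ne_zero hk.ne'
  exact Nat.sInf_mem (s := {n | Realizable n (j + 1)}) (exists_realizable j)

lemma Realizable.minPoints_le_of {n k : ℕ} (h : Realizable n k) : minPoints k ≤ n :=
  Nat.sInf_le h

/-- For `k ≥ 3`: `m(k) ≤ 1 + m(k-1)`, and `m(k) ≤ m(d) + m(k/d)` for every
divisor `d` of `k` with `1 < d < k`. -/
theorem minPoints_le (k : ℕ) (hk : 3 ≤ k) :
    minPoints k ≤ 1 + minPoints (k - 1) ∧
      ∀ d : ℕ, d ∣ k → 1 < d → d < k → minPoints k ≤ minPoints d + minPoints (k / d) := by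
  constructor
  · have h := realizable_succ (realizable_minPoints (k := k - 1) (by omega))
    rw [Nat.sub_add_cancel (by omega)] at h
    rw [add_comm]
    exact h.minPoints_le_of
  · intro d hd h1 h2
    have h := realizable_mul (realizable_minPoints (k := d) (by omega))
      (realizable_minPoints (k := k / d) (Nat.div_pos h2.le (by omega)))
    rw [Nat.mul_div_cancel' hd] at h
    exact h.minPoints_le_of
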